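/- Let X and Y be objects of an arboreal category. Duplicator has a winning strategy in the positive arboreal game 𝒢⁺(X,Y) if, and only if, there exists a positive back-and-forth system from X to Y. -/

import Mathlib

open CategoryTheory CategoryTheory.Limits

universe v u

variable {C : Type u} [Category.{v} C]

/-- A stable proper factorisation system `(Q, M)` on a category `C`:
every morphism factors as a quotient followed by an embedding, the two classes
determine each other by lifting properties, quotients are epimorphisms, embeddings
are monomorphisms, and pullbacks of quotients along embeddings exist and are
quotients. -/
structure PreArboreal (C : Type u) [Category.{v} C] : Type (max u (v + 1)) where
  /-- The class of quotients. -/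
  IsQ : MorphismProperty C
  /-- The class of embeddings. -/
  IsM : MorphismProperty C
  factor : ∀ {X Y : C} (f : X ⟶ Y),
    ∃ (Z : C) (e : X ⟶ Z) (m : Z ⟶ Y), IsQ e ∧ IsM m ∧ e ≫ m = f
  q_llp : ∀ {X Y : C} (f : X ⟶ Y),
    IsQ f ↔ ∀ {X' Y' : C} (g : X' ⟶ Y'), IsM g → HasLiftingProperty f g
  m_rlp : ∀ {X Y : C} (g : X ⟶ Y),
    IsM g ↔ ∀ {X' Y' : C} (f : X' ⟶ Y'), IsQ f → HasLiftingProperty f g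
  q_epi : ∀ {X Y : C} (f : X ⟶ Y), IsQ f → Epi f
  m_mono : ∀ {X Y : C} (f : X ⟶ Y), IsM f → Mono f
  stable : ∀ {X Y Z : C} (e : X ⟶ Z) (m : Y ⟶ Z), IsQ e → IsM m →
    ∃ (W : C) (p : W ⟶ X) (q : W ⟶ Y), IsPullback p q e m ∧ IsQ q

namespace PreArboreal

/-- A representative of an `M`-subobject of `X`: an embedding into `X`. -/
structure MSub (A : PreArboreal C) (X : C) : Type (max u v) where
  dom : C
  hom : dom ⟶ X
  emb : A.IsM hom

/-- The preorder on `M`-subobjects of `X`. -/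
def mle (A : PreArboreal C) {X : C} (f g : A.MSub X) : Prop :=
  ∃ h : f.dom ⟶ g.dom, h ≫ g.hom = f.hom

/-- Equivalence of `M`-subobjects (they represent the same element of the poset
`ΣM X`). -/
def mequiv (A : PreArboreal C) {X : C} (f g : A.MSub X) : Prop :=
  A.mle f g ∧ A.mle g f

/-- A path: an object whose poset of `M`-subobjects is a finite linear order. -/
def IsPathObj (A : PreArboreal C) (P : C) : Prop :=
  (∀ f g : A.MSub P, A.mle f g ∨ A.mle g f) ∧
  ∃ (n : ℕ) (l : Fin n → A.MSub P), ∀ f : A.MSub P, ∃ i, A.mequiv f (l i)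

/-- A path embedding into `X`, i.e. an element of the tree `P X`. -/
structure PathsOver (A : PreArboreal C) (X : C) : Type (max u v) where
  sub : A.MSub X
  path : IsPathObj A sub.dom

instance (A : PreArboreal C) (X : C) : Category (PathsOver A X) where
  Hom p q := {h : p.sub.dom ⟶ q.sub.dom // h ≫ q.sub.hom = p.sub.hom}
  id p := ⟨𝟙 _, Category.id_comp _⟩
  comp f g := ⟨f.1 ≫ g.1, by rw [Category.assoc, g.2, f.2]⟩
  id_comp f := Subtype.ext (Category.id_comp _)
  comp_id f := Subtype.ext (Category.comp_id _)
  assoc f g h := Subtype.ext (Category.assoc _ _ _)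

/-- The tree-indexed diagram of the paths embedding into `X`. -/
def pathsDiagram (A : PreArboreal C) (X : C) : PathsOver A X ⥤ C where
  obj p := p.sub.dom
  map f := f.1
  map_id _ := rfl
  map_comp _ _ := rfl

/-- The canonical cocone over the diagram of paths embedding into `X`, with vertex
`X`. -/
def pathsCocone (A : PreArboreal C) (X : C) : Cocone (pathsDiagram A X) where
  pt := X
  ι :=
    { app := fun p => p.sub.hom
      naturality := fun p q f => by
        show f.1 ≫ q.sub.hom = p.sub.hom ≫ 𝟙 X
        rw [Category.comp_id, f.2] }

/-- The order on the tree `P X` of path embeddings into `X` (on representatives). -/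
def ple (A : PreArboreal C) {X : C} (p q : PathsOver A X) : Prop := A.mle p.sub q.sub

/-- The strict order on `P X`. -/
def plt (A : PreArboreal C) {X : C} (p q : PathsOver A X) : Prop :=
  A.ple p q ∧ ¬ A.ple q p

/-- The covering relation `⋖` of the tree `P X`. -/
def pcov (A : PreArboreal C) {X : C} (p q : PathsOver A X) : Prop :=
  A.plt p q ∧ ∀ z : PathsOver A X, ¬ (A.plt p z ∧ A.plt z q)

/-- The root `⊥_X` of the tree `P X` (as a predicate on representatives). -/
def pRoot (A : PreArboreal C) {X : C} (p : PathsOver A X) : Prop :=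
  ∀ q : PathsOver A X, A.ple p q

end PreArboreal

/-- An arboreal category: a category with a stable proper factorisation system such
that coproducts of paths exist and paths are connected, quotients between paths satisfy
the 2-out-of-3 property, and every object is the colimit of the paths embedding into
it. -/
structure Arboreal (C : Type u) [Category.{v} C] extends PreArboreal C where
  pathCoproducts : ∀ (ι : Type v) (F : ι → C),
    (∀ i, toPreArboreal.IsPathObj (F i)) → HasCoproduct F
  pathConnected : ∀ P : C, toPreArboreal.IsPathObj P →
    ∀ (ι : Type v) (F : ι → C), Nonempty ι → (∀ i, toPreArboreal.IsPathObj (F i)) →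
      ∀ (c : Cofan F), IsColimit c → ∀ g : P ⟶ c.pt,
        ∃ (i : ι) (g' : P ⟶ F i), g' ≫ c.inj i = g
  twoOfThree : ∀ {P P' P'' : C}, toPreArboreal.IsPathObj P →
    toPreArboreal.IsPathObj P' → toPreArboreal.IsPathObj P'' →
    ∀ (f : P ⟶ P') (g : P' ⟶ P''),
      (toPreArboreal.IsQ f → toPreArboreal.IsQ g → toPreArboreal.IsQ (f ≫ g)) ∧
      (toPreArboreal.IsQ f → toPreArboreal.IsQ (f ≫ g) → toPreArboreal.IsQ g) ∧
      (toPreArboreal.IsQ g → toPreArboreal.IsQ (f ≫ g) → toPreArboreal.IsQ f)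
  pathGenerated : ∀ X : C,
    Nonempty (IsColimit (PreArboreal.pathsCocone toPreArboreal X))

namespace PreArboreal

/-- There is a quotient between the domains of the path embeddings `m` and `n`
(the pairs `⟨m, n⟩` of Definition 7.3). -/
def QuotPair (A : PreArboreal C) {X Y : C}
    (m : PathsOver A X) (n : PathsOver A Y) : Prop :=
  ∃ e : m.sub.dom ⟶ n.sub.dom, A.IsQ e

/-- A positive back-and-forth system from `X` to `Y`: a set `B` of pairs `⟨m, n⟩`
(each admitting a quotient `dom m ↠ dom n`) containing the pair of roots and
satisfying the forth and back conditions along the covering relations. -/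
def IsPBFS (A : PreArboreal C) (X Y : C)
    (B : PathsOver A X → PathsOver A Y → Prop) : Prop :=
  (∀ m n, B m n → A.QuotPair m n) ∧
  (∃ m n, A.pRoot m ∧ A.pRoot n ∧ B m n) ∧
  (∀ m n, B m n → ∀ m', A.pcov m m' → ∃ n', A.pcov n n' ∧ B m' n') ∧
  (∀ m n, B m n → ∀ n', A.pcov n n' → ∃ m', A.pcov m m' ∧ B m' n')

/-- A positive back-and-forth system is strong if it is downward closed along the
covering relations. -/
def IsStrong (A : PreArboreal C) {X Y : C}
    (B : PathsOver A X → PathsOver A Y → Prop) : Prop :=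
  ∀ m n, B m n → ∀ m' n', A.pcov m' m → A.pcov n' n → B m' n'

end PreArboreal
namespace PreArboreal

/-- Duplicator has a winning strategy in the positive arboreal game `𝒢⁺(X, Y)`:
winning positions are pairs `(m, n)` of path embeddings with an arrow
`dom m → dom n`; the initial position is the pair of roots, and at each round either
Spoiler moves to a cover `m ⋖ m'` and Duplicator responds with a cover `n ⋖ n'`, or
conversely; Duplicator must stay within winning positions forever.  This is rendered
by the existence of a winning invariant: a set `S` of positions containing the initial
position, consisting of winning positions, and closed under Spoiler's moves. -/
def GPlusWin (A : PreArboreal C) (X Y : C) : Prop :=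
  ∃ S : PathsOver A X → PathsOver A Y → Prop,
    (∃ m n, A.pRoot m ∧ A.pRoot n ∧ S m n) ∧
    ∀ m n, S m n → Nonempty (m.sub.dom ⟶ n.sub.dom) ∧
      (∀ m', A.pcov m m' → ∃ n', A.pcov n n' ∧ S m' n') ∧
      (∀ n', A.pcov n n' → ∃ m', A.pcov m m' ∧ S m' n')

end PreArboreal

/-!
Play on the pairs `(m, n)` for which every arrow `dom m ⟶ dom n` is a quotient. The pair of roots
is one of them, because `⊥_Y` has no proper subobjects. The property survives a round
`m ⋖ m'`, `n ⋖ n'`: an arrow `dom m' ⟶ dom n'` that is not a quotient has its image strictly below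
`n'`, hence below `n`, which gives an arrow `dom m' ⟶ dom n`. Its restriction to `dom m` is a
quotient by assumption, so cancellation makes `m ≤ m'` an isomorphism, contradicting `m ⋖ m'`.
-/

section Order

variable {α β : Type*} [Preorder α] [Preorder β]

theorem finite_antisymmetrization_of_map_le_map_iff {f : α → β}
    (hf : ∀ a b, f a ≤ f b ↔ a ≤ b) [Finite (Antisymmetrization β (· ≤ ·))] :
    Finite (Antisymmetrization α (· ≤ ·)) := by
  have hf' (a b : α) : AntisymmRel (· ≤ ·) (f a) (f b) ↔ AntisymmRel (· ≤ ·) a b :=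
    and_congr (hf a b) (hf b a)
  let F : Antisymmetrization α (· ≤ ·) → Antisymmetrization β (· ≤ ·) :=
    Quotient.map f fun a b => (hf' a b).2
  refine Finite.of_injective F fun x y => ?_
  induction x using Quotient.inductionOn
  induction y using Quotient.inductionOn
  exact fun h => Quotient.sound ((hf' _ _).1 (Quotient.exact h))

theorem le_left_or_right_le_of_covBy {a b c : α} (hab : a ⋖ b) (hcb : c ≤ b)
    (hac : c ≤ a ∨ a ≤ c) : c ≤ a ∨ b ≤ c := by
  by_contra! ⟨hca, hbc⟩
  exact hab.2 (lt_of_le_not_ge (hac.resolve_left hca) hca) (lt_of_le_not_ge hcb hbc)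

end Order

namespace PreArboreal

section Factorisation

variable (A : PreArboreal C) {X Y Z : C}

theorem isQ_eq_llp : A.IsQ = A.IsM.llp := by
  ext X Y f
  exact A.q_llp f

theorem isM_eq_rlp : A.IsM = A.IsQ.rlp := by
  ext X Y f
  exact A.m_rlp f

instance : A.IsQ.RespectsIso := by
  rw [isQ_eq_llp]
  infer_instance

instance : A.IsM.IsMultiplicative := by
  rw [isM_eq_rlp]
  infer_instance

instance : A.IsM.IsStableUnderBaseChange := by
  rw [isM_eq_rlp]
  infer_instance

variable {A}

theorem isM_of_isM_comp {f : X ⟶ Y} {g : Y ⟶ Z} (hg : A.IsM g) (hfg : A.IsM (f ≫ g)) :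
    A.IsM f :=
  A.IsM.of_postcomp (W' := .monomorphisms C) f g (A.m_mono g hg) hfg

theorem isQ_of_isQ_comp {f : X ⟶ Y} {g : Y ⟶ Z} (hfg : A.IsQ (f ≫ g)) : A.IsQ g := by
  rw [A.q_llp]
  intro U V m hm
  have := A.m_mono m hm
  have := (A.q_llp _).1 hfg m hm
  refine ⟨fun {a b} sq => ?_⟩
  have outer : CommSq (f ≫ a) (f ≫ g) m b := ⟨by simp [sq.w]⟩
  exact ⟨⟨⟨outer.lift, by simp [← cancel_mono m, sq.w], outer.fac_right⟩⟩⟩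

theorem isIso_of_isQ_of_isM {f : X ⟶ Y} (hQ : A.IsQ f) (hM : A.IsM f) : IsIso f := by
  have := A.m_mono f hM
  have := (A.q_llp f).1 hQ f hM
  have sq : CommSq (𝟙 X) f f (𝟙 Y) := ⟨by simp⟩
  exact ⟨sq.lift, sq.fac_left, sq.fac_right⟩

end Factorisation

section Subobjects

variable {A : PreArboreal C} {P X Y : C}

instance : Preorder (A.MSub X) where
  le := A.mle
  le_refl s := ⟨𝟙 _, Category.id_comp _⟩
  le_trans _ _ _ := fun ⟨h, hh⟩ ⟨k, hk⟩ => ⟨h ≫ k, by rw [Category.assoc, hk, hh]⟩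

/-- The `M`-subobject of `Y` obtained from one of `X` by composing with an embedding
`k : X ⟶ Y`. -/
def MSub.postcomp (s : A.MSub X) {k : X ⟶ Y} (hk : A.IsM k) : A.MSub Y :=
  ⟨s.dom, s.hom ≫ k, A.IsM.comp_mem _ _ s.emb hk⟩

theorem MSub.postcomp_le_postcomp_iff (s t : A.MSub X) {k : X ⟶ Y} (hk : A.IsM k) :
    s.postcomp hk ≤ t.postcomp hk ↔ s ≤ t := by
  have := A.m_mono k hk
  refine exists_congr fun (h : s.dom ⟶ t.dom) => ?_
  change h ≫ t.hom ≫ k = s.hom ≫ k ↔ h ≫ t.hom = s.hom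
  rw [← Category.assoc, cancel_mono]

theorem MSub.postcomp_le (t : A.MSub X) (r : A.MSub t.dom) : r.postcomp t.emb ≤ t :=
  ⟨r.hom, rfl⟩

theorem MSub.exists_postcomp_eq_of_le {s t : A.MSub X} (hst : s ≤ t) :
    ∃ r : A.MSub t.dom, r.postcomp t.emb = s := by
  obtain ⟨S, f, hf⟩ := s
  obtain ⟨h : S ⟶ t.dom, rfl : h ≫ t.hom = f⟩ := hst
  exact ⟨⟨S, h, isM_of_isM_comp t.emb hf⟩, rfl⟩

theorem MSub.isIso_hom_of_le_postcomp {t : A.MSub X} {r : A.MSub t.dom}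
    (h : t ≤ r.postcomp t.emb) : IsIso r.hom := by
  obtain ⟨i : t.dom ⟶ r.dom, hi : i ≫ r.hom ≫ t.hom = t.hom⟩ := h
  have := A.m_mono _ t.emb
  have := A.m_mono _ r.emb
  have : IsSplitEpi r.hom := ⟨⟨i, by rwa [← cancel_mono t.hom, Category.assoc, Category.id_comp]⟩⟩
  exact isIso_of_mono_of_isSplitEpi r.hom

theorem MSub.le_of_isQ {s t : A.MSub X} {i : s.dom ⟶ t.dom} (hi : i ≫ t.hom = s.hom)
    (hQ : A.IsQ i) : t ≤ s := by
  have hM : A.IsM i := isM_of_isM_comp t.emb (hi ▸ s.emb)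
  have := isIso_of_isQ_of_isM hQ hM
  exact ⟨inv i, by rw [IsIso.inv_comp_eq, hi]⟩

theorem MSub.exists_image (t : A.MSub X) (f : P ⟶ t.dom) :
    ∃ s ≤ t, Nonempty (P ⟶ s.dom) ∧ (t ≤ s → A.IsQ f) := by
  obtain ⟨I, e, k, he, hk, rfl⟩ := A.factor f
  let r : A.MSub t.dom := ⟨I, k, hk⟩
  refine ⟨r.postcomp t.emb, t.postcomp_le r, ⟨e⟩, fun h => ?_⟩
  have : IsIso k := isIso_hom_of_le_postcomp (r := r) h
  exact (A.IsQ.cancel_right_of_respectsIso e k).2 he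

end Subobjects

section Paths

variable {A : PreArboreal C} {P X : C}

theorem isPathObj_iff : A.IsPathObj P ↔
    (∀ s t : A.MSub P, s ≤ t ∨ t ≤ s) ∧ Finite (Antisymmetrization (A.MSub P) (· ≤ ·)) := by
  refine and_congr_right fun _ => ⟨fun ⟨n, l, hl⟩ => ?_, fun _ => ?_⟩
  · refine Finite.of_surjective (fun i => toAntisymmetrization (· ≤ ·) (l i)) fun x => ?_
    induction x using Antisymmetrization.ind with | _ s => ?_
    obtain ⟨i, hi⟩ := hl s
    exact ⟨i, Quotient.sound hi.symm⟩
  · obtain ⟨n, ⟨e⟩⟩ := Finite.exists_equiv_fin (Antisymmetrization (A.MSub P) (· ≤ ·))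
    refine ⟨n, fun i => ofAntisymmetrization (· ≤ ·) (e.symm i), fun s => ?_⟩
    have hs : toAntisymmetrization (· ≤ ·) s = toAntisymmetrization (· ≤ ·)
        (ofAntisymmetrization (· ≤ ·) (e.symm (e (toAntisymmetrization (· ≤ ·) s)))) := by
      rw [e.symm_apply_apply, toAntisymmetrization_ofAntisymmetrization]
    exact ⟨_, (Quotient.exact hs : AntisymmRel (· ≤ ·) s _)⟩

theorem isPathObj_of_isM {k : P ⟶ X} (hk : A.IsM k) (hX : A.IsPathObj X) :
    A.IsPathObj P := by
  obtain ⟨total, _⟩ := isPathObj_iff.1 hX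
  have le_iff (s t : A.MSub P) := s.postcomp_le_postcomp_iff t hk
  exact isPathObj_iff.2 ⟨fun s t => (total (s.postcomp hk) (t.postcomp hk)).imp
    (le_iff s t).1 (le_iff t s).1, finite_antisymmetrization_of_map_le_map_iff le_iff⟩

theorem isPathObj_dom_of_le {s t : A.MSub X} (hst : s ≤ t) (ht : A.IsPathObj t.dom) :
    A.IsPathObj s.dom := by
  obtain ⟨r, rfl⟩ := MSub.exists_postcomp_eq_of_le hst
  exact isPathObj_of_isM r.emb ht

theorem le_total_of_le_of_isPathObj_dom {r s t : A.MSub X} (ht : A.IsPathObj t.dom)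
    (hr : r ≤ t) (hs : s ≤ t) : r ≤ s ∨ s ≤ r := by
  obtain ⟨r, rfl⟩ := MSub.exists_postcomp_eq_of_le hr
  obtain ⟨s, rfl⟩ := MSub.exists_postcomp_eq_of_le hs
  simp only [MSub.postcomp_le_postcomp_iff]
  exact ht.1 r s

theorem isMin_sub_of_pRoot {n : A.PathsOver X} (hn : A.pRoot n) : IsMin n.sub :=
  fun s hs => hn ⟨s, isPathObj_dom_of_le hs n.path⟩

theorem covBy_sub_of_pcov {m n : A.PathsOver X} (h : A.pcov m n) : m.sub ⋖ n.sub :=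
  ⟨h.1, fun s hms hsn => h.2 ⟨s, isPathObj_dom_of_le hsn.le n.path⟩ ⟨hms, hsn⟩⟩

end Paths

section Game

variable {A : PreArboreal C} {P X Y : C}

theorem isQ_of_pRoot {n : A.PathsOver Y} (hn : A.pRoot n) (f : P ⟶ n.sub.dom) : A.IsQ f := by
  obtain ⟨s, hs, -, isQ_of_le⟩ := n.sub.exists_image f
  exact isQ_of_le (isMin_sub_of_pRoot hn hs)

theorem isQ_or_nonempty_hom_of_pcov {n n' : A.PathsOver Y} (h : A.pcov n n')
    (f : P ⟶ n'.sub.dom) : A.IsQ f ∨ Nonempty (P ⟶ n.sub.dom) := by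
  obtain ⟨s, hs, ⟨e⟩, isQ_of_le⟩ := n'.sub.exists_image f
  have hcov := covBy_sub_of_pcov h
  have total := le_total_of_le_of_isPathObj_dom n'.path hs hcov.le
  rcases le_left_or_right_le_of_covBy hcov hs total with ⟨b, -⟩ | hle
  · exact .inr ⟨e ≫ b⟩
  · exact .inl (isQ_of_le hle)

/-- The part of the two-out-of-three property of quotients between paths that cancels a quotient
on the right. -/
def PathQuotientsCancelRight (A : PreArboreal C) : Prop :=
  ∀ ⦃P P' P'' : C⦄, A.IsPathObj P → A.IsPathObj P' → A.IsPathObj P'' →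
    ∀ (f : P ⟶ P') (g : P' ⟶ P''), A.IsQ g → A.IsQ (f ≫ g) → A.IsQ f

theorem isEmpty_hom_of_plt (hA : A.PathQuotientsCancelRight) {m m' : A.PathsOver X}
    {n : A.PathsOver Y} (hQ : ∀ f : m.sub.dom ⟶ n.sub.dom, A.IsQ f) (h : A.plt m m') :
    IsEmpty (m'.sub.dom ⟶ n.sub.dom) := by
  refine ⟨fun g => ?_⟩
  obtain ⟨⟨i, hi⟩, hlt⟩ := h
  have hg : A.IsQ g := isQ_of_isQ_comp (hQ (i ≫ g))
  exact hlt (MSub.le_of_isQ hi (hA m.path m'.path n.path i g hg (hQ (i ≫ g))))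

theorem isQ_of_pcov_of_pcov (hA : A.PathQuotientsCancelRight) {m m' : A.PathsOver X}
    {n n' : A.PathsOver Y} (hQ : ∀ f : m.sub.dom ⟶ n.sub.dom, A.IsQ f)
    (hm : A.pcov m m') (hn : A.pcov n n') (f : m'.sub.dom ⟶ n'.sub.dom) : A.IsQ f :=
  (isQ_or_nonempty_hom_of_pcov hn f).resolve_right
    (not_nonempty_iff.2 (isEmpty_hom_of_plt hA hQ hm.1))

theorem gPlusWin_of_isPBFS {B : A.PathsOver X → A.PathsOver Y → Prop} (hB : A.IsPBFS X Y B) :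
    A.GPlusWin X Y := by
  obtain ⟨quot, roots, forth, back⟩ := hB
  refine ⟨B, roots, fun m n hmn => ⟨?_, forth m n hmn, back m n hmn⟩⟩
  obtain ⟨e, -⟩ := quot m n hmn
  exact ⟨e⟩

theorem exists_isPBFS_of_gPlusWin (hA : A.PathQuotientsCancelRight) (h : A.GPlusWin X Y) :
    ∃ B, A.IsPBFS X Y B := by
  obtain ⟨S, ⟨m₀, n₀, hm₀, hn₀, hS₀⟩, hS⟩ := h
  refine ⟨fun m n => S m n ∧ ∀ f : m.sub.dom ⟶ n.sub.dom, A.IsQ f, ?quot,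
    ⟨m₀, n₀, hm₀, hn₀, hS₀, isQ_of_pRoot hn₀⟩, ?forth, ?back⟩
  case quot =>
    rintro m n ⟨hmn, hQ⟩
    obtain ⟨f⟩ := (hS m n hmn).1
    exact ⟨f, hQ f⟩
  case forth =>
    rintro m n ⟨hmn, hQ⟩ m' hm'
    obtain ⟨n', hn', hmn'⟩ := (hS m n hmn).2.1 m' hm'
    exact ⟨n', hn', hmn', isQ_of_pcov_of_pcov hA hQ hm' hn'⟩
  case back =>
    rintro m n ⟨hmn, hQ⟩ n' hn'
    obtain ⟨m', hm', hmn'⟩ := (hS m n hmn).2.2 n' hn'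
    exact ⟨m', hm', hmn', isQ_of_pcov_of_pcov hA hQ hm' hn'⟩

end Game

end PreArboreal

theorem positive_arboreal_game_iff_back_and_forth_system_general {A : PreArboreal C}
    (hA : A.PathQuotientsCancelRight) (X Y : C) :
    A.GPlusWin X Y ↔ ∃ B, A.IsPBFS X Y B :=
  ⟨PreArboreal.exists_isPBFS_of_gPlusWin hA, fun ⟨_, hB⟩ => PreArboreal.gPlusWin_of_isPBFS hB⟩

/-- Duplicator has a winning strategy in the positive arboreal game
`𝒢⁺(X, Y)` if, and only if, there exists a positive back-and-forth system from `X`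
to `Y`. -/
theorem positive_arboreal_game_iff_back_and_forth_system
    {C : Type u} [Category.{v} C] (A : Arboreal C) (X Y : C) :
    PreArboreal.GPlusWin A.toPreArboreal X Y ↔
      ∃ B, PreArboreal.IsPBFS A.toPreArboreal X Y B := by
  exact positive_arboreal_game_iff_back_and_forth_system_general
    (fun _ _ _ hP hP' hP'' f g => (A.twoOfThree hP hP' hP'' f g).2.2) X Y
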